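/- arXiv:1010.2597 — 2 statements merged into one kernel-verified Lean document; each statement's English description precedes it below -/
import Mathlib

section
/- In any Λ_F-term, any two distinct F-redex occurrences are disjoint subterms (neither occurrence is contained in the other); consequently F-reduction is confluent: if M →_F* N' and M →_F* N'' then there exists a Λ_F-term P with N' →_F* P and N'' →_F* P, where →_F* is the reflexive–transitive closure of →_F. -/
/-!
A term of the form `c_f N₁ ⋯ Nₙ` determines `f` and the list of arguments (`apps_const_inj`), and
encodings of data contain no constant symbol (`constFree_enc`), whereas every F-redex contains one
(`not_constFree_of_isFRedex`). Hence a redex occurrence inside `c_f ⌜a₁⌝ ⋯ ⌜a_k⌝` must be a prefix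
`c_f ⌜a₁⌝ ⋯ ⌜a_j⌝` of the spine, and the arity of `f` forces `j = k`: a redex has no F-redex
as a proper subterm (`position_eq_nil`), which is disjointness.

Since moreover encodings are injective, the contractum of a redex is determined by the redex
(`FAx.deterministic`). Two coinitial F-steps therefore either agree or contract disjoint redexes,
and then commute in one step each (`FStep.diamond`); confluence follows by the usual tiling
argument, `Relation.church_rosser`.
-/

/-- The two datatypes: natural numbers and Booleans. -/
inductive Dt : Type
  | nat
  | bool
  deriving DecidableEq

def Dt.carrier : Dt → Type
  | .nat => ℕ
  | .bool => Bool

instance Dt.decEqCarrier : (D : Dt) → DecidableEq D.carrier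
  | .nat => inferInstanceAs (DecidableEq ℕ)
  | .bool => inferInstanceAs (DecidableEq Bool)

/-- A family `F` of typed functions over the datatypes. -/
structure Sig where
  Sym : Type
  arity : Sym → ℕ
  dom : (f : Sym) → Fin (arity f) → Dt
  cod : Sym → Dt
  interp : (f : Sym) → ((i : Fin (arity f)) → (dom f i).carrier) → (cod f).carrier

/-- Terms of the `Λ_F`-calculus (de Bruijn representation, so α-equivalence is equality). -/
inductive LamF (S : Sig) : Type
  | var : ℕ → LamF S
  | const : S.Sym → LamF S
  | app : LamF S → LamF S → LamF S
  | lam : LamF S → LamF S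

namespace LamF

variable {S : Sig}

def lift (d : ℕ) : LamF S → LamF S
  | var n => if n < d then var n else var (n + 1)
  | const c => const c
  | app M N => app (lift d M) (lift d N)
  | lam M => lam (lift (d + 1) M)

def subst : LamF S → ℕ → LamF S → LamF S
  | var n, k, N => if n = k then N else if k < n then var (n - 1) else var n
  | const c, _, _ => const c
  | app A B, k, N => app (subst A k N) (subst B k N)
  | lam A, k, N => lam (subst A (k + 1) (lift 0 N))

def apps : LamF S → List (LamF S) → LamF S := List.foldl app

def Ktrue : LamF S := lam (lam (var 1))
def Kfalse : LamF S := lam (lam (var 0))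

def num : ℕ → LamF S
  | 0 => lam (app (app (var 0) Ktrue) Kfalse)
  | n + 1 => lam (app (app (var 0) Kfalse) (num n))

/-- Encoding of an element of a datatype as a `Λ_F`-term. -/
def enc : (D : Dt) → D.carrier → LamF S
  | .nat, n => num n
  | .bool, b => cond b Ktrue Kfalse

/-- One-step β-reduction. -/
inductive BStep : LamF S → LamF S → Prop
  | beta (M N : LamF S) : BStep (app (lam M) N) (subst M 0 N)
  | appL {M M' : LamF S} (N : LamF S) : BStep M M' → BStep (app M N) (app M' N)
  | appR (M : LamF S) {N N' : LamF S} : BStep N N' → BStep (app M N) (app M N')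
  | abs {M M' : LamF S} : BStep M M' → BStep (lam M) (lam M')

/-- The `F`-axioms: `c_f ⌜a₁⌝ ⋯ ⌜a_k⌝ → ⌜f(a₁,…,a_k)⌝` (root redexes). -/
inductive FAx : LamF S → LamF S → Prop
  | intro (f : S.Sym) (a : (i : Fin (S.arity f)) → (S.dom f i).carrier) :
      FAx (apps (const f) (List.ofFn fun i => enc (S.dom f i) (a i)))
          (enc (S.cod f) (S.interp f a))

/-- One-step `F`-reduction: contextual closure of the `F`-axioms. -/
inductive FStep : LamF S → LamF S → Prop
  | ax {M N : LamF S} : FAx M N → FStep M N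
  | appL {M M' : LamF S} (N : LamF S) : FStep M M' → FStep (app M N) (app M' N)
  | appR (M : LamF S) {N N' : LamF S} : FStep N N' → FStep (app M N) (app M N')
  | abs {M M' : LamF S} : FStep M M' → FStep (lam M) (lam M')

def BStar : LamF S → LamF S → Prop := Relation.ReflTransGen BStep
def FStar : LamF S → LamF S → Prop := Relation.ReflTransGen FStep

/-- One-step reduction of the `Λ_F`-calculus: β or F. -/
def Step (M N : LamF S) : Prop := BStep M N ∨ FStep M N

def Star : LamF S → LamF S → Prop := Relation.ReflTransGen Step

/-- `M` is an `F`-redex. -/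
def IsFRedex (M : LamF S) : Prop := ∃ N, FAx M N

/-- `M` contains an `F`-redex (equivalently: some `F`-step applies to `M`). -/
def HasF (M : LamF S) : Prop := ∃ N, FStep M N

def size : LamF S → ℕ
  | var _ => 1
  | const _ => 1
  | app A B => size A + size B + 1
  | lam A => size A + 1

end LamF

namespace LamF

variable {S : Sig}

/-- The subterm of `M` at a position (`0`/`1` = left/right child of an application,
`0` = body of an abstraction). -/
def subtermAt : LamF S → List ℕ → Option (LamF S)
  | M, [] => some M
  | app A _, 0 :: p => subtermAt A p
  | app _ B, 1 :: p => subtermAt B p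
  | lam A, 0 :: p => subtermAt A p
  | _, _ :: _ => none

end LamF

namespace LamF

variable {S : Sig}

/-- No constant symbol `c_f` occurs in the term. -/
def ConstFree : LamF S → Prop
  | var _ => True
  | const _ => False
  | app A B => ConstFree A ∧ ConstFree B
  | lam A => ConstFree A

theorem constFree_num (n : ℕ) : ConstFree (num n : LamF S) := by
  induction n with
  | zero => simp [num, Ktrue, Kfalse, ConstFree]
  | succ n ih => simp [num, Kfalse, ConstFree, ih]

theorem constFree_enc (D : Dt) (d : D.carrier) : ConstFree (enc D d : LamF S) := by
  cases D with
  | nat => exact constFree_num d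
  | bool =>
    change Bool at d
    cases d <;> simp [enc, Ktrue, Kfalse, ConstFree]

theorem num_injective : Function.Injective (num : ℕ → LamF S) := by
  intro m
  induction m with
  | zero => intro n h; cases n <;> simp_all [num, Ktrue, Kfalse]
  | succ m ih =>
    intro n h
    cases n with
    | zero => simp [num, Ktrue, Kfalse] at h
    | succ n =>
      simp only [num, lam.injEq, app.injEq, true_and] at h
      rw [ih h]

theorem enc_injective (D : Dt) : Function.Injective (enc D : D.carrier → LamF S) := by
  cases D with
  | nat => exact num_injective
  | bool =>
    intro a b h
    change Bool at a b
    cases a <;> cases b <;> first | rfl | simp [enc, Ktrue, Kfalse] at h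

theorem apps_concat (M : LamF S) (l : List (LamF S)) (N : LamF S) :
    apps M (l ++ [N]) = app (apps M l) N := by
  simp [apps]

/-- The head constant and the argument list can be read off from an applied constant. -/
theorem apps_const_inj {f g : S.Sym} {l l' : List (LamF S)}
    (h : apps (const f) l = apps (const g) l') : f = g ∧ l = l' := by
  induction l using List.reverseRecOn generalizing l' with
  | nil =>
    cases l' using List.reverseRecOn with
    | nil => simpa [apps] using h
    | append_singleton l' N' => rw [apps_concat] at h; simp [apps] at h
  | append_singleton l N ih =>
    cases l' using List.reverseRecOn with
    | nil => rw [apps_concat] at h; simp [apps] at h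
    | append_singleton l' N' =>
      rw [apps_concat, apps_concat, app.injEq] at h
      obtain ⟨rfl, rfl⟩ := ih h.1
      exact ⟨rfl, by rw [h.2]⟩

theorem not_constFree_apps (f : S.Sym) (l : List (LamF S)) :
    ¬ ConstFree (apps (const f) l) := by
  induction l using List.reverseRecOn with
  | nil => simp [apps, ConstFree]
  | append_singleton l N ih =>
    rw [apps_concat]
    exact fun h => ih h.1

theorem not_constFree_of_isFRedex {M : LamF S} (h : IsFRedex M) : ¬ ConstFree M := by
  obtain ⟨_, ⟨f, a⟩⟩ := h
  exact not_constFree_apps _ _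

theorem ConstFree.subtermAt {M R : LamF S} {p : List ℕ} (hM : ConstFree M)
    (h : LamF.subtermAt M p = some R) : ConstFree R := by
  fun_induction LamF.subtermAt M p <;> simp_all [ConstFree]

theorem subtermAt_append {M R : LamF S} {p : List ℕ} (q : List ℕ)
    (h : subtermAt M p = some R) : subtermAt M (p ++ q) = subtermAt R q := by
  fun_induction subtermAt M p <;> simp_all [subtermAt]

/-- An applied constant is a redex only if it has exactly as many arguments as its arity. -/
theorem length_eq_of_isFRedex {f : S.Sym} {l : List (LamF S)}
    (h : IsFRedex (apps (const f) l)) : l.length = S.arity f := by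
  obtain ⟨N, hN⟩ := h
  generalize hM : apps (const f) l = M at hN
  obtain ⟨g, a⟩ := hN
  obtain ⟨rfl, rfl⟩ := apps_const_inj hM
  simp

/-- A constant applied to at most arity-many constant-free arguments can contain an F-redex only
at the root. The induction over the argument list also records that the list is then full,
which is what excludes redexes among the proper prefixes of the spine. -/
theorem position_eq_nil_of_apps {f : S.Sym} {l : List (LamF S)} {p : List ℕ} {R : LamF S}
    (hl : ∀ N ∈ l, ConstFree N) (hlen : l.length ≤ S.arity f)
    (h : subtermAt (apps (const f) l) p = some R) (hR : IsFRedex R) :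
    p = [] ∧ l.length = S.arity f := by
  induction l using List.reverseRecOn generalizing p with
  | nil =>
    cases p with
    | nil =>
      simp only [subtermAt, Option.some.injEq] at h
      subst h
      exact ⟨rfl, length_eq_of_isFRedex hR⟩
    | cons i p => simp [apps, subtermAt] at h
  | append_singleton l N ih =>
    cases p with
    | nil =>
      simp only [subtermAt, Option.some.injEq] at h
      subst h
      exact ⟨rfl, length_eq_of_isFRedex hR⟩
    | cons i p =>
      rw [apps_concat] at h
      rw [List.length_append, List.length_singleton] at hlen
      match i, h with
      | 0, h =>
        have := (ih (fun N hN => hl N (by simp [hN])) (by omega) h).2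
        omega
      | 1, h =>
        exact absurd ((hl N (by simp)).subtermAt h) (not_constFree_of_isFRedex hR)
      | i + 2, h => simp [subtermAt] at h

/-- An F-redex contains no F-redex other than itself. -/
theorem position_eq_nil {M R : LamF S} {p : List ℕ} (hM : IsFRedex M)
    (h : subtermAt M p = some R) (hR : IsFRedex R) : p = [] := by
  obtain ⟨_, ⟨f, a⟩⟩ := hM
  refine (position_eq_nil_of_apps ?_ (by simp) h hR).1
  intro N hN
  obtain ⟨i, rfl⟩ := (List.mem_ofFn' _ _).1 hN
  exact constFree_enc _ _

theorem eq_of_prefix {M R R' : LamF S} {p q : List ℕ}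
    (hp : subtermAt M p = some R) (hR : IsFRedex R)
    (hq : subtermAt M q = some R') (hR' : IsFRedex R') (hpq : p <+: q) : p = q := by
  obtain ⟨r, rfl⟩ := hpq
  rw [subtermAt_append r hp] at hq
  simp [position_eq_nil hR hq hR']

theorem FAx.deterministic {M N N' : LamF S} (h : FAx M N) (h' : FAx M N') : N = N' := by
  obtain ⟨f, a⟩ := h
  generalize hM : apps (const f) (List.ofFn fun i => enc (S.dom f i) (a i)) = M at h'
  obtain ⟨g, b⟩ := h'
  obtain ⟨rfl, hl⟩ := apps_const_inj hM
  have hab : a = b := funext fun i => enc_injective _ (congrFun (List.ofFn_injective hl) i)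
  rw [hab]

theorem FStep.exists_redex {M N : LamF S} (h : FStep M N) :
    ∃ p R, subtermAt M p = some R ∧ IsFRedex R := by
  induction h with
  | ax h => exact ⟨[], _, by simp [subtermAt], _, h⟩
  | appL N _ ih => obtain ⟨p, R, h, hR⟩ := ih; exact ⟨0 :: p, R, h, hR⟩
  | appR M _ ih => obtain ⟨p, R, h, hR⟩ := ih; exact ⟨1 :: p, R, h, hR⟩
  | abs _ ih => obtain ⟨p, R, h, hR⟩ := ih; exact ⟨0 :: p, R, h, hR⟩

/-- Every F-step out of a redex contracts that redex itself. -/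
theorem FStep.fax_of_isFRedex {M N : LamF S} (hM : IsFRedex M) (h : FStep M N) : FAx M N := by
  cases h with
  | ax h => exact h
  | appL N h =>
    obtain ⟨p, R, h, hR⟩ := h.exists_redex
    exact absurd (position_eq_nil (p := 0 :: p) hM h hR) (by simp)
  | appR M h =>
    obtain ⟨p, R, h, hR⟩ := h.exists_redex
    exact absurd (position_eq_nil (p := 1 :: p) hM h hR) (by simp)
  | abs h =>
    obtain ⟨p, R, h, hR⟩ := h.exists_redex
    exact absurd (position_eq_nil (p := 0 :: p) hM h hR) (by simp)

theorem FStep.diamond {M A B : LamF S} (hA : FStep M A) (hB : FStep M B) :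
    A = B ∨ ∃ C, FStep A C ∧ FStep B C := by
  induction hA generalizing B with
  | ax h => exact .inl (h.deterministic (hB.fax_of_isFRedex ⟨_, h⟩))
  | appL N h ih =>
    cases hB with
    | ax h' => exact .inl (((FStep.appL N h).fax_of_isFRedex ⟨_, h'⟩).deterministic h')
    | appL _ h' =>
      rcases ih h' with rfl | ⟨C, h₁, h₂⟩
      · exact .inl rfl
      · exact .inr ⟨_, .appL _ h₁, .appL _ h₂⟩
    | appR _ h' => exact .inr ⟨_, .appR _ h', .appL _ h⟩
  | appR M h ih =>
    cases hB with
    | ax h' => exact .inl (((FStep.appR M h).fax_of_isFRedex ⟨_, h'⟩).deterministic h')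
    | appL _ h' => exact .inr ⟨_, .appL _ h', .appR _ h⟩
    | appR _ h' =>
      rcases ih h' with rfl | ⟨C, h₁, h₂⟩
      · exact .inl rfl
      · exact .inr ⟨_, .appR _ h₁, .appR _ h₂⟩
  | abs h ih =>
    cases hB with
    | ax h' => exact .inl (((FStep.abs h).fax_of_isFRedex ⟨_, h'⟩).deterministic h')
    | abs h' =>
      rcases ih h' with rfl | ⟨C, h₁, h₂⟩
      · exact .inl rfl
      · exact .inr ⟨_, .abs h₁, .abs h₂⟩

end LamF

/-- Any two distinct F-redex occurrences in a Λ_F-term are disjoint (neither position is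
a prefix of the other); consequently F-reduction is confluent. -/
theorem fredexes_disjoint_and_fstep_confluent (S : Sig) :
    (∀ (M : LamF S) (p q : List ℕ) (R R' : LamF S),
      LamF.subtermAt M p = some R → LamF.IsFRedex R →
      LamF.subtermAt M q = some R' → LamF.IsFRedex R' →
      p ≠ q → ¬ p <+: q ∧ ¬ q <+: p) ∧
    (∀ M N' N'' : LamF S, LamF.FStar M N' → LamF.FStar M N'' →
      ∃ P : LamF S, LamF.FStar N' P ∧ LamF.FStar N'' P) := by
  refine ⟨fun M p q R R' hp hR hq hR' hne => ⟨fun h => ?_, fun h => ?_⟩, fun M N' N'' h' h'' => ?_⟩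
  · exact hne (LamF.eq_of_prefix hp hR hq hR' h)
  · exact hne (LamF.eq_of_prefix hq hR' hp hR h).symm
  · refine Relation.church_rosser (fun M A B hA hB => ?_) h' h''
    rcases LamF.FStep.diamond hA hB with rfl | ⟨C, h₁, h₂⟩
    · exact ⟨A, .refl, .refl⟩
    · exact ⟨C, .single h₁, .single h₂⟩
end

section
/- β-reduction and F-reduction commute in the Λ_F-calculus: if M →_F* P and M →_β* Q then there exists a Λ_F-term N such that P →_β* N and Q →_F* N (where →_β* and →_F* denote the reflexive–transitive closures of →_β and →_F). -/
namespace LamF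

variable {S : Sig}

/-! ### Encodings are closed and β-normal -/

theorem lift_num (n d : ℕ) : lift d (num n : LamF S) = num n := by
  induction n generalizing d with
  | zero => simp [num, lift, Ktrue, Kfalse]
  | succ n ih => simp [num, lift, Kfalse, ih]

theorem subst_num (n k : ℕ) (N : LamF S) : subst (num n) k N = num n := by
  induction n generalizing k N with
  | zero => simp [num, subst, Ktrue, Kfalse]
  | succ n ih => simp [num, subst, Kfalse, ih]

theorem lift_enc (D : Dt) (a : D.carrier) (d : ℕ) : lift d (enc D a : LamF S) = enc D a := by
  cases D with
  | nat => exact lift_num a d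
  | bool =>
    cases (a : Bool) <;> simp [enc, lift, Ktrue, Kfalse]

theorem subst_enc (D : Dt) (a : D.carrier) (k : ℕ) (N : LamF S) :
    subst (enc D a) k N = enc D a := by
  cases D with
  | nat => exact subst_num a k N
  | bool =>
    cases (a : Bool) <;> simp [enc, subst, Ktrue, Kfalse]

theorem not_bstep_Ktrue (Q : LamF S) : ¬ BStep Ktrue Q := by
  rintro (_ | _ | _ | (_ | _ | _ | ⟨⟨⟩⟩))

theorem not_bstep_Kfalse (Q : LamF S) : ¬ BStep Kfalse Q := by
  rintro (_ | _ | _ | (_ | _ | _ | ⟨⟨⟩⟩))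

theorem not_bstep_num (n : ℕ) (Q : LamF S) : ¬ BStep (num n) Q := by
  induction n generalizing Q with
  | zero =>
    intro h
    obtain _ | _ | _ | h := h
    obtain _ | ⟨_, h⟩ | ⟨_, h⟩ | _ := h
    · obtain _ | ⟨_, h⟩ | ⟨_, h⟩ | _ := h
      · cases h
      · exact not_bstep_Ktrue _ h
    · exact not_bstep_Kfalse _ h
  | succ n ih =>
    intro h
    obtain _ | _ | _ | h := h
    obtain _ | ⟨_, h⟩ | ⟨_, h⟩ | _ := h
    · obtain _ | ⟨_, h⟩ | ⟨_, h⟩ | _ := h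
      · cases h
      · exact not_bstep_Kfalse _ h
    · exact ih _ h

theorem not_bstep_enc (D : Dt) (a : D.carrier) (Q : LamF S) : ¬ BStep (enc D a) Q := by
  cases D with
  | nat => exact not_bstep_num a Q
  | bool =>
    cases (a : Bool)
    · exact not_bstep_Kfalse Q
    · exact not_bstep_Ktrue Q

/-! ### `F`-redexes -/

/-- A β-normal term that is not an abstraction: no β-redex occurs in it, and none appears when it
is put in function position. -/
def Rigid (M : LamF S) : Prop := (∀ Q, ¬ BStep M Q) ∧ ∀ A, M ≠ lam A

theorem Rigid.apps {M : LamF S} (hM : Rigid M) (l : List (LamF S))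
    (hl : ∀ A ∈ l, ∀ Q, ¬ BStep A Q) : Rigid (apps M l) := by
  induction l generalizing M with
  | nil => exact hM
  | cons A l ih =>
    refine ih (M := app M A) ⟨fun Q h => ?_, fun A h => by cases h⟩
      fun B hB => hl B (List.mem_cons_of_mem _ hB)
    cases h with
    | beta => exact hM.2 _ rfl
    | appL _ h => exact hM.1 _ h
    | appR _ h => exact hl A List.mem_cons_self _ h

theorem FAx.rigid {M P : LamF S} (h : FAx M P) : Rigid M := by
  obtain ⟨f, a⟩ := h
  have hf : Rigid (const f : LamF S) := ⟨fun Q h => (by cases h), fun A h => (by cases h)⟩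
  refine hf.apps _ fun A hA => ?_
  obtain ⟨i, rfl⟩ := List.mem_ofFn.1 hA
  exact not_bstep_enc _ _

theorem lift_apps (M : LamF S) (l : List (LamF S)) (d : ℕ) :
    lift d (apps M l) = apps (lift d M) (l.map (lift d)) := by
  induction l generalizing M with
  | nil => rfl
  | cons A l ih => exact ih (app M A)

theorem subst_apps (M : LamF S) (l : List (LamF S)) (k : ℕ) (N : LamF S) :
    subst (apps M l) k N = apps (subst M k N) (l.map fun A => subst A k N) := by
  induction l generalizing M with
  | nil => rfl
  | cons A l ih => exact ih (app M A)

theorem FAx.lift {M P : LamF S} (h : FAx M P) (d : ℕ) : FAx (lift d M) (lift d P) := by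
  obtain ⟨f, a⟩ := h
  rw [lift_apps, lift_enc, List.map_ofFn]
  simp only [Function.comp_def, lift_enc]
  exact FAx.intro f a

theorem FAx.subst {M P : LamF S} (h : FAx M P) (k : ℕ) (N : LamF S) :
    FAx (subst M k N) (subst P k N) := by
  obtain ⟨f, a⟩ := h
  rw [subst_apps, subst_enc, List.map_ofFn]
  simp only [Function.comp_def, subst_enc]
  exact FAx.intro f a

/-! ### `F`-reduction and substitution -/

theorem FStep.lift {M P : LamF S} (h : FStep M P) (d : ℕ) : FStep (lift d M) (lift d P) := by
  induction h generalizing d with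
  | ax h => exact .ax (h.lift d)
  | appL _ _ ih => exact .appL _ (ih d)
  | appR _ _ ih => exact .appR _ (ih d)
  | abs _ ih => exact .abs (ih (d + 1))

theorem FStep.subst {M P : LamF S} (h : FStep M P) (k : ℕ) (N : LamF S) :
    FStep (subst M k N) (subst P k N) := by
  induction h generalizing k N with
  | ax h => exact .ax (h.subst k N)
  | appL _ _ ih => exact .appL _ (ih k N)
  | appR _ _ ih => exact .appR _ (ih k N)
  | abs _ ih => exact .abs (ih (k + 1) _)

theorem FStar.app {A A' B B' : LamF S} (hA : FStar A A') (hB : FStar B B') :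
    FStar (app A B) (app A' B') :=
  (Relation.ReflTransGen.lift (fun X => LamF.app X B) (fun _ _ h => FStep.appL B h) _ _ hA).trans
    (Relation.ReflTransGen.lift (fun X => LamF.app A' X) (fun _ _ h => FStep.appR A' h) _ _ hB)

theorem FStar.lam {A A' : LamF S} (hA : FStar A A') : FStar (lam A) (lam A') :=
  Relation.ReflTransGen.lift LamF.lam (fun _ _ h => FStep.abs h) _ _ hA

/-- An `F`-step in the substituted term is performed once for each occurrence of the variable. -/
theorem FStep.subst_right (M : LamF S) {N N' : LamF S} (h : FStep N N') (k : ℕ) :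
    FStar (LamF.subst M k N) (LamF.subst M k N') := by
  induction M generalizing N N' k with
  | var n =>
    simp only [LamF.subst]
    split_ifs
    · exact .single h
    · exact .refl
    · exact .refl
  | const c => exact .refl
  | app A B ihA ihB => exact FStar.app (ihA h k) (ihB h k)
  | lam A ih => exact FStar.lam (ih (h.lift 0) (k + 1))

/-! ### Commutation -/

/-- The β-side is closed by exactly one step, because the β-redex has exactly one residual. -/
theorem local_commute {M P Q : LamF S} (hB : BStep M Q) (hF : FStep M P) :
    ∃ N, BStep P N ∧ FStar Q N := by
  induction hB generalizing P with
  | beta M N =>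
    cases hF with
    | ax h => exact (h.rigid.1 _ (.beta M N)).elim
    | appL _ h =>
      cases h with
      | ax h => exact (h.rigid.2 _ rfl).elim
      | abs h => exact ⟨_, .beta _ _, .single (h.subst 0 N)⟩
    | appR _ h => exact ⟨_, .beta _ _, h.subst_right M 0⟩
  | appL N hM ih =>
    cases hF with
    | ax h => exact (h.rigid.1 _ (.appL N hM)).elim
    | appL _ h =>
      obtain ⟨R, h₁, h₂⟩ := ih h
      exact ⟨_, .appL N h₁, FStar.app h₂ .refl⟩
    | appR _ h => exact ⟨_, .appL _ hM, .single (.appR _ h)⟩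
  | appR M hN ih =>
    cases hF with
    | ax h => exact (h.rigid.1 _ (.appR M hN)).elim
    | appL _ h => exact ⟨_, .appR _ hN, .single (.appL _ h)⟩
    | appR _ h =>
      obtain ⟨R, h₁, h₂⟩ := ih h
      exact ⟨_, .appR M h₁, FStar.app .refl h₂⟩
  | abs hM ih =>
    cases hF with
    | ax h => exact (h.rigid.2 _ rfl).elim
    | abs h =>
      obtain ⟨R, h₁, h₂⟩ := ih h
      exact ⟨_, .abs h₁, FStar.lam h₂⟩

theorem strip_commute {M P Q : LamF S} (hF : FStar M P) (hB : BStep M Q) :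
    ∃ N, BStep P N ∧ FStar Q N := by
  induction hF with
  | refl => exact ⟨Q, hB, .refl⟩
  | tail _ h ih =>
    obtain ⟨R, h₁, h₂⟩ := ih
    obtain ⟨N, h₃, h₄⟩ := local_commute h₁ h
    exact ⟨N, h₃, Relation.ReflTransGen.trans h₂ h₄⟩

end LamF

/-- β-reduction and F-reduction commute in the Λ_F-calculus. -/
theorem beta_F_commute (S : Sig) (M P Q : LamF S)
    (hF : LamF.FStar M P) (hB : LamF.BStar M Q) :
    ∃ N : LamF S, LamF.BStar P N ∧ LamF.FStar Q N := by
  induction hB with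
  | refl => exact ⟨P, .refl, hF⟩
  | tail _ h ih =>
    obtain ⟨R, h₁, h₂⟩ := ih
    obtain ⟨N, h₃, h₄⟩ := LamF.strip_commute h₂ h
    exact ⟨N, Relation.ReflTransGen.tail h₁ h₃, h₄⟩
end
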